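/- Let n ≥ 1 be an integer, 0 ≤ k ≤ n, 0 < p < 1, q = 1 − p. Then |∂/∂p F_{n,p}(k+1) − ∂/∂p G_{n,p}(k)| ≤ (1/(pq)) · (c₁/q + c₂), where c₁ = 0.516 and c₂ = 0.121; here ∂/∂p F_{n,p}(k+1) is the derivative in p of p ↦ Σ_{i=0}^{k} C(n,i) p^i q^{n−i}, which equals −n C(n−1,k) p^k q^{n−1−k}, and ∂/∂p G_{n,p}(k) is the derivative in p of p ↦ Φ((k − np)/√(npq)). -/

import Mathlib

/-- The standard normal distribution function Φ. -/
noncomputable def Phi (x : ℝ) : ℝ :=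
  (Real.sqrt (2 * Real.pi))⁻¹ * ∫ t in Set.Iio x, Real.exp (-t ^ 2 / 2)

/-- The characteristic function of the centred Bernoulli distribution with parameter `p`. -/
noncomputable def bernoulliCharFun (p t : ℝ) : ℂ :=
  (1 - p) * Complex.exp ((-(p * t) : ℝ) * Complex.I) + p * Complex.exp (((1 - p) * t : ℝ) * Complex.I)

theorem norm_exp_mul_I_sub_one_le (x : ℝ) : ‖Complex.exp (x * Complex.I) - 1‖ ≤ |x| := by
  simpa [mul_comm] using Real.norm_exp_I_mul_ofReal_sub_one_le (x := x)

theorem hasDerivAt_exp_mul_I (x : ℝ) :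
    HasDerivAt (fun x : ℝ => Complex.exp (x * Complex.I))
      (Complex.exp (x * Complex.I) * Complex.I) x := by
  have h : HasDerivAt (fun x : ℝ => (x : ℂ) * Complex.I) (1 * Complex.I) x :=
    (HasDerivAt.ofReal_comp (hasDerivAt_id x)).mul_const _
  simpa using h.cexp

theorem norm_exp_mul_I_sub_taylor_one_le {x : ℝ} (hx : 0 ≤ x) :
    ‖Complex.exp (x * Complex.I) - 1 - x * Complex.I‖ ≤ x ^ 2 / 2 := by
  have hd : ∀ y : ℝ, HasDerivAt (fun x : ℝ => Complex.exp (x * Complex.I) - 1 - x * Complex.I)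
      ((Complex.exp (y * Complex.I) - 1) * Complex.I) y := fun y => by
    refine (((hasDerivAt_exp_mul_I y).sub_const 1).sub
      ((HasDerivAt.ofReal_comp (hasDerivAt_id y)).mul_const Complex.I)).congr_deriv ?_
    push_cast
    ring
  refine image_norm_le_of_norm_deriv_right_le_deriv_boundary (a := 0) (b := x)
    (B := fun y => y ^ 2 / 2) (B' := fun y => y)
    (fun y _ => (hd y).continuousAt.continuousWithinAt) (fun y _ => (hd y).hasDerivWithinAt)
    (by simp) (fun y => ?_) (fun y hy => ?_) ⟨hx, le_refl x⟩
  · exact ((hasDerivAt_pow 2 y).div_const 2).congr_deriv (by simp)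
  · simpa [abs_of_nonneg hy.1] using norm_exp_mul_I_sub_one_le y

theorem norm_exp_mul_I_sub_taylor_two_le_of_nonneg {x : ℝ} (hx : 0 ≤ x) :
    ‖Complex.exp (x * Complex.I) - 1 - x * Complex.I + x ^ 2 / 2‖ ≤ x ^ 3 / 6 := by
  have hd : ∀ y : ℝ, HasDerivAt
      (fun x : ℝ => Complex.exp (x * Complex.I) - 1 - x * Complex.I + (x : ℂ) ^ 2 / 2)
      ((Complex.exp (y * Complex.I) - 1 - y * Complex.I) * Complex.I) y := fun y => by
    refine ((((hasDerivAt_exp_mul_I y).sub_const 1).sub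
      ((HasDerivAt.ofReal_comp (hasDerivAt_id y)).mul_const Complex.I)).add
      (((HasDerivAt.ofReal_comp (hasDerivAt_id y)).pow 2).div_const 2)).congr_deriv ?_
    simp
    linear_combination (y : ℂ) * Complex.I_sq
  refine image_norm_le_of_norm_deriv_right_le_deriv_boundary (a := 0) (b := x)
    (B := fun y => y ^ 3 / 6) (B' := fun y => y ^ 2 / 2)
    (fun y _ => (hd y).continuousAt.continuousWithinAt) (fun y _ => (hd y).hasDerivWithinAt)
    (by simp) (fun y => ?_) (fun y hy => ?_) ⟨hx, le_refl x⟩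
  · exact ((hasDerivAt_pow 3 y).div_const 6).congr_deriv (by push_cast; ring)
  · simpa using norm_exp_mul_I_sub_taylor_one_le hy.1

theorem norm_exp_mul_I_sub_taylor_two_le (x : ℝ) :
    ‖Complex.exp (x * Complex.I) - 1 - x * Complex.I + x ^ 2 / 2‖ ≤ |x| ^ 3 / 6 := by
  rcases le_total 0 x with hx | hx
  · simpa [abs_of_nonneg hx] using norm_exp_mul_I_sub_taylor_two_le_of_nonneg hx
  · have h := norm_exp_mul_I_sub_taylor_two_le_of_nonneg (neg_nonneg.2 hx)
    rw [abs_of_nonpos hx]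
    rw [← Complex.norm_conj] at h
    convert h using 2
    simp only [map_add, map_sub, map_mul, map_pow, map_div₀, map_one, map_ofNat, ← Complex.exp_conj,
      Complex.conj_I, Complex.conj_ofReal]
    simp

theorem continuous_bernoulliCharFun (p : ℝ) : Continuous (bernoulliCharFun p) := by
  unfold bernoulliCharFun
  fun_prop

theorem norm_bernoulliCharFun_sub_taylor_le {p : ℝ} (h0 : 0 ≤ p) (h1 : p ≤ 1) (t : ℝ) :
    ‖bernoulliCharFun p t - (1 - p * (1 - p) * t ^ 2 / 2 : ℝ)‖ ≤
      p * (1 - p) * (1 - 2 * (p * (1 - p))) / 6 * |t| ^ 3 := by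
  have e : bernoulliCharFun p t - (1 - p * (1 - p) * t ^ 2 / 2 : ℝ) =
      ((1 - p : ℝ) : ℂ) * (Complex.exp ((-(p * t) : ℝ) * Complex.I) - 1 -
        (-(p * t) : ℝ) * Complex.I + ((-(p * t) : ℝ) : ℂ) ^ 2 / 2) +
      (p : ℂ) * (Complex.exp (((1 - p) * t : ℝ) * Complex.I) - 1 -
        ((1 - p) * t : ℝ) * Complex.I + (((1 - p) * t : ℝ) : ℂ) ^ 2 / 2) := by
    unfold bernoulliCharFun
    push_cast
    ring
  have q0 : 0 ≤ 1 - p := sub_nonneg.2 h1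
  rw [e]
  refine (norm_add_le _ _).trans ?_
  rw [norm_mul, norm_mul, Complex.norm_of_nonneg q0, Complex.norm_of_nonneg h0]
  have ha := mul_le_mul_of_nonneg_left (norm_exp_mul_I_sub_taylor_two_le (-(p * t))) q0
  have hb := mul_le_mul_of_nonneg_left (norm_exp_mul_I_sub_taylor_two_le ((1 - p) * t)) h0
  refine (add_le_add ha hb).trans (le_of_eq ?_)
  rw [abs_neg, abs_mul, abs_mul, abs_of_nonneg h0, abs_of_nonneg q0]
  ring

theorem norm_bernoulliCharFun_le {p : ℝ} (h0 : 0 ≤ p) (h1 : p ≤ 1) {t : ℝ} (ht : |t| ≤ Real.pi) :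
    ‖bernoulliCharFun p t‖ ≤ Real.exp (-(0.2026 * (p * (1 - p))) * t ^ 2) := by
  have hu : 0 ≤ p * (1 - p) := mul_nonneg h0 (sub_nonneg.2 h1)
  have hcos := Real.cos_le_one_sub_mul_cos_sq ht
  have hpi : 0.2026 ≤ 2 / Real.pi ^ 2 := by
    rw [le_div_iff₀ (by positivity)]
    nlinarith [Real.pi_lt_d4, Real.pi_pos]
  have hsq : ‖bernoulliCharFun p t‖ ^ 2 = 1 - 2 * (p * (1 - p)) * (1 - Real.cos t) := by
    have e : bernoulliCharFun p t = Complex.exp ((-(p * t) : ℝ) * Complex.I) *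
        (1 - p + p * Complex.exp (t * Complex.I)) := by
      unfold bernoulliCharFun
      rw [mul_add, mul_left_comm, ← Complex.exp_add]
      push_cast
      ring_nf
    rw [e, norm_mul, Complex.norm_exp_ofReal_mul_I, one_mul, ← Complex.normSq_eq_norm_sq,
      Complex.normSq_apply, Complex.exp_mul_I, ← Complex.ofReal_cos, ← Complex.ofReal_sin]
    simp only [Complex.add_re, Complex.sub_re, Complex.one_re, Complex.ofReal_re, Complex.mul_re,
      Complex.I_re, mul_zero, Complex.ofReal_im, Complex.I_im, mul_one, Complex.add_im,
      Complex.sub_im, Complex.one_im, Complex.mul_im]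
    linear_combination p ^ 2 * Real.sin_sq_add_cos_sq t
  refine (sq_le_sq₀ (norm_nonneg _) (Real.exp_nonneg _)).1 ?_
  rw [hsq, ← Real.exp_nat_mul]
  have h2 : 0.2026 * t ^ 2 ≤ 2 / Real.pi ^ 2 * t ^ 2 := by gcongr
  have h3 := Real.add_one_le_exp (((2 : ℕ) : ℝ) * (-(0.2026 * (p * (1 - p))) * t ^ 2))
  refine le_trans ?_ h3
  push_cast
  have : p * (1 - p) * (0.2026 * t ^ 2) ≤ p * (1 - p) * (1 - Real.cos t) :=
    mul_le_mul_of_nonneg_left (by linarith) hu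
  linarith

theorem abs_exp_neg_sub_one_sub_le {x : ℝ} (hx : 0 ≤ x) :
    |Real.exp (-x) - (1 - x)| ≤ x ^ 2 / 2 := by
  rw [abs_le]
  have h1 := Real.add_one_le_exp (-x)
  refine ⟨by nlinarith [sq_nonneg x], ?_⟩
  have h2 := Real.quadratic_le_exp_of_nonneg hx
  have h3 : Real.exp (-x) * Real.exp x = 1 := by rw [← Real.exp_add]; simp
  have h4 : Real.exp (-x) * (1 + x + x ^ 2 / 2) ≤ 1 :=
    (mul_le_mul_of_nonneg_left h2 (Real.exp_nonneg _)).trans_eq h3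
  have h5 : 0 < 1 + x + x ^ 2 / 2 := by positivity
  have h6 : Real.exp (-x) ≤ 1 / (1 + x + x ^ 2 / 2) := by rwa [le_div_iff₀ h5]
  have h7 : 1 / (1 + x + x ^ 2 / 2) ≤ 1 - x + x ^ 2 / 2 := by
    rw [div_le_iff₀ h5]
    nlinarith [sq_nonneg (x ^ 2)]
  linarith

theorem norm_bernoulliCharFun_sub_gaussian_le {p : ℝ} (h0 : 0 ≤ p) (h1 : p ≤ 1) {t : ℝ}
    (ht : |t| ≤ Real.pi) :
    ‖bernoulliCharFun p t - (Real.exp (-(p * (1 - p) / 2) * t ^ 2) : ℝ)‖ ≤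
      p * (1 - p) * (1 / 6 + 0.0594 * (p * (1 - p))) * |t| ^ 3 := by
  have hu : 0 ≤ p * (1 - p) := mul_nonneg h0 (sub_nonneg.2 h1)
  have ha := norm_bernoulliCharFun_sub_taylor_le h0 h1 t
  have hb := abs_exp_neg_sub_one_sub_le (x := p * (1 - p) / 2 * t ^ 2) (by positivity)
  have e : bernoulliCharFun p t - (Real.exp (-(p * (1 - p) / 2) * t ^ 2) : ℝ) =
      (bernoulliCharFun p t - (1 - p * (1 - p) * t ^ 2 / 2 : ℝ)) -
      ((Real.exp (-(p * (1 - p) / 2 * t ^ 2)) - (1 - p * (1 - p) / 2 * t ^ 2) : ℝ) : ℂ) := by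
    push_cast
    ring_nf
  rw [e]
  refine (norm_sub_le _ _).trans ?_
  rw [Complex.norm_real, Real.norm_eq_abs]
  refine (add_le_add ha hb).trans ?_
  have hpi : |t| ≤ 3.1416 := ht.trans Real.pi_lt_d4.le
  have h4 : |t| * (|t| ^ 3 * (p * (1 - p)) ^ 2) ≤ 3.1416 * (|t| ^ 3 * (p * (1 - p)) ^ 2) := by
    gcongr
  have h5 : t ^ 2 = |t| ^ 2 := (sq_abs t).symm
  have h6 : 0 ≤ |t| ^ 3 * (p * (1 - p)) ^ 2 := by positivity
  rw [h5]
  nlinarith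

theorem norm_pow_sub_pow_le {x y : ℂ} {a b s : ℝ} (r : ℕ) (hx : ‖x‖ ≤ Real.exp (-a * s))
    (hy : ‖y‖ ≤ Real.exp (-b * s)) :
    ‖x ^ (r + 1) - y ^ (r + 1)‖ ≤
      ‖x - y‖ * ∑ j ∈ Finset.range (r + 1), Real.exp (-(a * j + b * (r - j)) * s) := by
  rw [← geom_sum₂_mul, norm_mul, mul_comm]
  refine mul_le_mul_of_nonneg_left ((norm_sum_le _ _).trans (Finset.sum_le_sum fun j hj => ?_))
    (norm_nonneg _)
  have hj' : j ≤ r := Nat.lt_succ_iff.1 (Finset.mem_range.1 hj)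
  rw [norm_mul, norm_pow, norm_pow, Nat.add_sub_cancel]
  calc ‖x‖ ^ j * ‖y‖ ^ (r - j) ≤ Real.exp (-a * s) ^ j * Real.exp (-b * s) ^ (r - j) := by gcongr
    _ = Real.exp (-(a * j + b * (r - j)) * s) := by
      rw [← Real.exp_nat_mul, ← Real.exp_nat_mul, ← Real.exp_add, Nat.cast_sub hj']
      ring_nf

theorem one_div_sub_one_div_div_eq {x y d : ℝ} (hx : x ≠ 0) (hy : y ≠ 0) (hd : d ≠ 0) :
    1 / x / d - 1 / y / d = (y - x) / d / (x * y) := by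
  field_simp

theorem sum_inv_sq_arith_le {a b : ℝ} (hab : a < b) (r : ℕ) (h : b - a < 2 * (a * r)) :
    ∑ j ∈ Finset.range (r + 1), 1 / (a * j + b * (r - j)) ^ 2 ≤
      (r + 1) / ((a * r - (b - a) / 2) * (b * r + (b - a) / 2)) := by
  set d := b - a with hd
  have hd0 : 0 < d := sub_pos.2 hab
  set f : ℕ → ℝ := fun j => 1 / (b * r - d * j + d / 2) / d with hf
  have key : ∀ j ∈ Finset.range (r + 1),
      1 / (a * j + b * (r - j)) ^ 2 ≤ f (j + 1) - f j := fun j hj => by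
    have hj' : (j : ℝ) ≤ r := by exact_mod_cast Nat.lt_succ_iff.1 (Finset.mem_range.1 hj)
    have e : a * j + b * (r - j) = b * r - d * j := by rw [hd]; ring
    have hx : d / 2 < b * r - d * j := by
      have : d * j ≤ d * r := by gcongr
      nlinarith
    have h1 : 0 < b * r - d * j - d / 2 := by linarith
    have h2 : 0 < b * r - d * j + d / 2 := by linarith
    have e2 : f (j + 1) - f j =
        1 / ((b * r - d * j - d / 2) * (b * r - d * j + d / 2)) := by
      simp only [hf]
      have : b * r - d * ((j + 1 : ℕ) : ℝ) + d / 2 = b * r - d * j - d / 2 := by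
        push_cast
        ring
      rw [this, one_div_sub_one_div_div_eq h1.ne' h2.ne' hd0.ne']
      congr 1
      field_simp
      ring
    rw [e, e2]
    apply one_div_le_one_div_of_le (by positivity)
    nlinarith
  refine (Finset.sum_le_sum key).trans ?_
  rw [Finset.sum_range_sub]
  have h1 : 0 < a * r - d / 2 := by linarith
  have h2 : 0 < b * r + d / 2 := by
    have : a * r ≤ b * r := by gcongr
    linarith
  have e1 : b * r - d * ((r + 1 : ℕ) : ℝ) + d / 2 = a * r - d / 2 := by
    push_cast
    rw [hd]
    ring
  simp only [hf]
  rw [e1]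
  apply le_of_eq
  simp only [Nat.cast_zero, mul_zero, sub_zero]
  rw [one_div_sub_one_div_div_eq h1.ne' h2.ne' hd0.ne']
  congr 1
  rw [div_eq_iff hd0.ne', hd]
  ring

theorem intervalIntegral_even {f : ℝ → ℝ} (hf : Continuous f) (heven : ∀ x, f (-x) = f x) (a : ℝ) :
    ∫ t in -a..a, f t = 2 * ∫ t in (0 : ℝ)..a, f t := by
  rw [← intervalIntegral.integral_add_adjacent_intervals (b := 0) (hf.intervalIntegrable _ _)
    (hf.intervalIntegrable _ _)]
  have : ∫ t in -a..0, f t = ∫ t in (0 : ℝ)..a, f t := by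
    rw [← neg_zero, ← intervalIntegral.integral_comp_neg]
    simp [heven]
  rw [this]
  ring

theorem integral_abs_mul_exp_neg_mul_sq_le {c a : ℝ} (hc : 0 < c) (ha : 0 ≤ a) :
    ∫ t in -a..a, |t| * Real.exp (-c * t ^ 2) ≤ 1 / c := by
  rw [intervalIntegral_even (by fun_prop) (by simp)]
  have hd : ∀ t : ℝ, HasDerivAt (fun t => -(1 / (2 * c)) * Real.exp (-c * t ^ 2))
      (t * Real.exp (-c * t ^ 2)) t := fun t => by
    refine ((((hasDerivAt_pow 2 t).const_mul (-c)).exp).const_mul (-(1 / (2 * c)))).congr_deriv ?_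
    field_simp
    simp
  have e : ∫ t in (0 : ℝ)..a, |t| * Real.exp (-c * t ^ 2) =
      ∫ t in (0 : ℝ)..a, t * Real.exp (-c * t ^ 2) := by
    refine intervalIntegral.integral_congr fun t ht => ?_
    rw [Set.uIcc_of_le ha] at ht
    simp [abs_of_nonneg ht.1]
  rw [e, intervalIntegral.integral_eq_sub_of_hasDerivAt (fun t _ => hd t)
    (Continuous.intervalIntegrable (by fun_prop) _ _)]
  have : 0 ≤ 1 / c * Real.exp (-c * a ^ 2) := by positivity
  simp only [ne_eq, OfNat.ofNat_ne_zero, not_false_eq_true, zero_pow, mul_zero, Real.exp_zero]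
  have e2 : 1 / (2 * c) = 1 / c / 2 := by field_simp
  rw [e2]
  linarith

theorem integral_abs_cube_mul_exp_neg_mul_sq_le {c a : ℝ} (hc : 0 < c) (ha : 0 ≤ a) :
    ∫ t in -a..a, |t| ^ 3 * Real.exp (-c * t ^ 2) ≤ 1 / c ^ 2 := by
  rw [intervalIntegral_even (by fun_prop) (by simp)]
  have hd : ∀ t : ℝ, HasDerivAt
      (fun t => (-(1 / (2 * c)) * t ^ 2 - 1 / (2 * c ^ 2)) * Real.exp (-c * t ^ 2))
      (t ^ 3 * Real.exp (-c * t ^ 2)) t := fun t => by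
    refine ((((hasDerivAt_pow 2 t).const_mul (-(1 / (2 * c)))).sub_const (1 / (2 * c ^ 2))).mul
      (((hasDerivAt_pow 2 t).const_mul (-c)).exp)).congr_deriv ?_
    field_simp
    simp
    ring
  have e : ∫ t in (0 : ℝ)..a, |t| ^ 3 * Real.exp (-c * t ^ 2) =
      ∫ t in (0 : ℝ)..a, t ^ 3 * Real.exp (-c * t ^ 2) := by
    refine intervalIntegral.integral_congr fun t ht => ?_
    rw [Set.uIcc_of_le ha] at ht
    simp [abs_of_nonneg ht.1]
  rw [e, intervalIntegral.integral_eq_sub_of_hasDerivAt (fun t _ => hd t)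
    (Continuous.intervalIntegrable (by fun_prop) _ _)]
  have h1 : 0 ≤ (1 / (2 * c) * a ^ 2 + 1 / (2 * c ^ 2)) * Real.exp (-c * a ^ 2) := by positivity
  simp only [ne_eq, OfNat.ofNat_ne_zero, not_false_eq_true, zero_pow, mul_zero, Real.exp_zero]
  have e2 : 1 / (2 * c ^ 2) = 1 / c ^ 2 / 2 := by field_simp
  rw [e2] at h1 ⊢
  linarith

theorem intervalIntegral_exp_neg_mul_sq_le {c a : ℝ} (hc : 0 < c) (ha : 0 ≤ a) :
    ∫ t in -a..a, Real.exp (-c * t ^ 2) ≤ √(Real.pi / c) := by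
  rw [← integral_gaussian, intervalIntegral.integral_of_le (by linarith)]
  exact MeasureTheory.setIntegral_le_integral (integrable_exp_neg_mul_sq hc)
    (Filter.Eventually.of_forall fun t => Real.exp_nonneg _)

theorem integral_Ioi_exp_neg_mul_sq_le {c a : ℝ} (hc : 0 < c) (ha : 0 < a) :
    ∫ t in Set.Ioi a, Real.exp (-c * t ^ 2) ≤ Real.exp (-c * a ^ 2) / (2 * c * a) := by
  have hneg : -(2 * c * a) < 0 := by have := mul_pos hc ha; linarith
  have hi : MeasureTheory.IntegrableOn
      (fun t => Real.exp (c * a ^ 2) * Real.exp (-(2 * c * a) * t)) (Set.Ioi a) :=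
    (integrableOn_exp_mul_Ioi hneg a).const_mul _
  refine (MeasureTheory.setIntegral_mono (integrable_exp_neg_mul_sq hc).integrableOn hi
    fun t => ?_).trans (le_of_eq ?_)
  · rw [← Real.exp_add]
    refine Real.exp_le_exp.2 ?_
    nlinarith [mul_nonneg hc.le (sq_nonneg (t - a))]
  · rw [MeasureTheory.integral_const_mul, integral_exp_mul_Ioi hneg, mul_div_assoc', mul_neg,
      neg_div_neg_eq, ← Real.exp_add]
    ring_nf

theorem intervalIntegral_exp_int_mul_I (a : ℤ) :
    ∫ t in -Real.pi..Real.pi, Complex.exp (a * t * Complex.I) =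
      ((if a = 0 then 2 * Real.pi else 0 : ℝ) : ℂ) := by
  split_ifs with h
  · simp [h]
    ring
  · have hc : (a : ℂ) * Complex.I ≠ 0 := mul_ne_zero (by exact_mod_cast h) Complex.I_ne_zero
    have e : ∀ t : ℝ, Complex.exp (a * t * Complex.I) = Complex.exp (a * Complex.I * t) := fun t => by
      ring_nf
    simp_rw [e]
    rw [integral_exp_mul_complex hc, Complex.ofReal_zero, div_eq_zero_iff]
    left
    rw [sub_eq_zero, Complex.exp_eq_exp_iff_exists_int]
    refine ⟨a, ?_⟩
    push_cast
    ring

theorem intervalIntegral_bernoulliCharFun_pow (p : ℝ) (m k : ℕ) :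
    ∫ t in -Real.pi..Real.pi, bernoulliCharFun p t ^ m *
        Complex.exp (((m * p - k) * t : ℝ) * Complex.I) =
      ((2 * Real.pi * (m.choose k * p ^ k * (1 - p) ^ (m - k)) : ℝ) : ℂ) := by
  have e : ∀ t : ℝ, bernoulliCharFun p t ^ m * Complex.exp (((m * p - k) * t : ℝ) * Complex.I) =
      ∑ j ∈ Finset.range (m + 1), ((m.choose j * p ^ j * (1 - p) ^ (m - j) : ℝ) : ℂ) *
        Complex.exp (((j - k : ℤ) : ℂ) * t * Complex.I) := fun t => by
    have e1 : bernoulliCharFun p t = Complex.exp ((-(p * t) : ℝ) * Complex.I) *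
        (p * Complex.exp (t * Complex.I) + (1 - p)) := by
      unfold bernoulliCharFun
      rw [mul_add, mul_left_comm, ← Complex.exp_add]
      push_cast
      ring_nf
    rw [e1, mul_pow, ← Complex.exp_nat_mul, add_pow, Finset.mul_sum, Finset.sum_mul]
    refine Finset.sum_congr rfl fun j _ => ?_
    rw [mul_pow, ← Complex.exp_nat_mul]
    have e2 : Complex.exp (((j - k : ℤ) : ℂ) * t * Complex.I) =
        Complex.exp (m * ((-(p * t) : ℝ) * Complex.I)) * Complex.exp (j * (t * Complex.I)) *
          Complex.exp (((m * p - k) * t : ℝ) * Complex.I) := by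
      rw [← Complex.exp_add, ← Complex.exp_add]
      push_cast
      ring_nf
    rw [e2]
    push_cast
    ring
  simp_rw [e]
  rw [intervalIntegral.integral_finsetSum
    fun j _ => Continuous.intervalIntegrable (by fun_prop) _ _]
  simp_rw [intervalIntegral.integral_const_mul, intervalIntegral_exp_int_mul_I]
  by_cases hk : k ≤ m
  · rw [Finset.sum_eq_single k]
    · simp
      ring
    · intro j _ hj
      rw [if_neg (by omega), Complex.ofReal_zero, mul_zero]
    · intro h
      exact absurd (Finset.mem_range.2 (by omega)) h
  · rw [Nat.choose_eq_zero_of_lt (not_le.1 hk), Finset.sum_eq_zero]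
    · simp
    · intro j hj
      have := Finset.mem_range.1 hj
      rw [if_neg (by omega), Complex.ofReal_zero, mul_zero]

theorem integral_gaussian_mul_exp_mul_I {v : ℝ} (hv : 0 < v) (y : ℝ) :
    ∫ t : ℝ, (Real.exp (-(v / 2) * t ^ 2) : ℂ) * Complex.exp ((y * t : ℝ) * Complex.I) =
      ((√(2 * Real.pi / v) * Real.exp (-(y ^ 2 / (2 * v))) : ℝ) : ℂ) := by
  have h := fourierIntegral_gaussian (b := ((v / 2 : ℝ) : ℂ)) (by simpa using hv) y
  have e : ∀ t : ℝ, (Real.exp (-(v / 2) * t ^ 2) : ℂ) * Complex.exp ((y * t : ℝ) * Complex.I) =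
      Complex.exp (Complex.I * y * t) * Complex.exp (-((v / 2 : ℝ) : ℂ) * t ^ 2) := fun t => by
    push_cast
    rw [mul_comm]
    ring_nf
  simp_rw [e]
  rw [h, Real.sqrt_eq_rpow]
  push_cast
  rw [Complex.ofReal_cpow (by positivity)]
  push_cast
  congr 2
  · field_simp
  · field_simp
    norm_num

theorem norm_integral_sub_intervalIntegral_le {g : ℝ → ℂ} {c a : ℝ} (hc : 0 < c) (ha : 0 < a)
    (hg : Continuous g) (hle : ∀ t, ‖g t‖ ≤ Real.exp (-c * t ^ 2)) :
    ‖(∫ t, g t) - ∫ t in -a..a, g t‖ ≤ Real.exp (-c * a ^ 2) / (c * a) := by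
  have hi : MeasureTheory.Integrable g :=
    (integrable_exp_neg_mul_sq hc).mono' hg.aestronglyMeasurable (Filter.Eventually.of_forall hle)
  have tail : ∀ h : ℝ → ℂ, (∀ t, ‖h t‖ ≤ Real.exp (-c * t ^ 2)) →
      ‖∫ t in Set.Ioi a, h t‖ ≤ Real.exp (-c * a ^ 2) / (2 * c * a) := fun h hh =>
    (MeasureTheory.norm_integral_le_of_norm_le (integrable_exp_neg_mul_sq hc).integrableOn
      (Filter.Eventually.of_forall hh)).trans (integral_Ioi_exp_neg_mul_sq_le hc ha)
  have e1 : ∫ t in Set.Iic (-a), g t = ∫ t in Set.Ioi a, g (-t) := by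
    rw [integral_comp_neg_Ioi]
  have e2 : (∫ t, g t) - ∫ t in -a..a, g t =
      (∫ t in Set.Ioi a, g (-t)) + ∫ t in Set.Ioi a, g t := by
    rw [← e1, ← intervalIntegral.integral_Iic_sub_Iic hi.integrableOn hi.integrableOn,
      ← intervalIntegral.integral_Iic_add_Ioi (b := a) hi.integrableOn hi.integrableOn]
    ring
  rw [e2]
  refine (norm_add_le _ _).trans ((add_le_add (tail _ fun t => ?_) (tail _ hle)).trans (le_of_eq ?_))
  · simpa using hle (-t)
  · field_simp
    norm_num

theorem binomial_prob_le {p : ℝ} (h0 : 0 < p) (h1 : p < 1) {m : ℕ} (hm : 0 < m) (k : ℕ) :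
    2 * Real.pi * (m.choose k * p ^ k * (1 - p) ^ (m - k)) ≤
      √(Real.pi / (0.2026 * (m * (p * (1 - p))))) := by
  have hq : 0 < 1 - p := sub_pos.2 h1
  have hm' : (0 : ℝ) < m := by exact_mod_cast hm
  have h := intervalIntegral_bernoulliCharFun_pow p m k
  have hn : 2 * Real.pi * (m.choose k * p ^ k * (1 - p) ^ (m - k)) =
      ‖((2 * Real.pi * (m.choose k * p ^ k * (1 - p) ^ (m - k)) : ℝ) : ℂ)‖ :=
    (Complex.norm_of_nonneg (by have := Real.pi_pos; positivity)).symm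
  rw [hn, ← h]
  refine le_trans ?_ (intervalIntegral_exp_neg_mul_sq_le (c := 0.2026 * (m * (p * (1 - p))))
    (by positivity) Real.pi_pos.le)
  refine intervalIntegral.norm_integral_le_of_norm_le (by linarith [Real.pi_pos])
    (Filter.Eventually.of_forall fun t ht => ?_) (Continuous.intervalIntegrable (by fun_prop) _ _)
  have ht' : |t| ≤ Real.pi := abs_le.2 ⟨ht.1.le, ht.2⟩
  rw [norm_mul, Complex.norm_exp_ofReal_mul_I, mul_one, norm_pow]
  refine (pow_le_pow_left₀ (norm_nonneg _) (norm_bernoulliCharFun_le h0.le h1.le ht') m).trans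
    (le_of_eq ?_)
  rw [← Real.exp_nat_mul]
  ring_nf

theorem norm_exp_mul_I_sub_gaussian_le {p u t : ℝ} (h0 : 0 ≤ p) (hu : 0 ≤ u)
    (ht : |t| ≤ Real.pi) :
    ‖Complex.exp ((-(p * t) : ℝ) * Complex.I) - (Real.exp (-(u / 2) * t ^ 2) : ℝ)‖ ≤
      (p + 1.5708 * u) * |t| := by
  have h1 := norm_exp_mul_I_sub_one_le (-(p * t))
  rw [abs_neg, abs_mul, abs_of_nonneg h0] at h1
  have h2 : ‖((1 - Real.exp (-(u / 2) * t ^ 2) : ℝ) : ℂ)‖ ≤ 1.5708 * u * |t| := by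
    have h3 := Real.add_one_le_exp (-(u / 2) * t ^ 2)
    have h4 : Real.exp (-(u / 2) * t ^ 2) ≤ 1 := Real.exp_le_one_iff.2 (by
      have : 0 ≤ u / 2 * t ^ 2 := by positivity
      linarith)
    rw [Complex.norm_of_nonneg (by linarith)]
    have h5 : |t| * (u * |t|) ≤ 3.1416 * (u * |t|) := by
      have := ht.trans Real.pi_lt_d4.le
      gcongr
    have h6 : t ^ 2 = |t| ^ 2 := (sq_abs t).symm
    rw [h6] at h3 ⊢
    linarith
  have e : Complex.exp ((-(p * t) : ℝ) * Complex.I) - (Real.exp (-(u / 2) * t ^ 2) : ℝ) =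
      (Complex.exp ((-(p * t) : ℝ) * Complex.I) - 1) +
        ((1 - Real.exp (-(u / 2) * t ^ 2) : ℝ) : ℂ) := by
    push_cast
    ring
  rw [e]
  refine (norm_add_le _ _).trans ?_
  linarith

theorem norm_bernoulliCharFun_pow_mul_sub_gaussian_le {p : ℝ} (h0 : 0 ≤ p) (h1 : p ≤ 1) (r : ℕ)
    {t : ℝ} (ht : |t| ≤ Real.pi) :
    ‖bernoulliCharFun p t ^ (r + 1) * Complex.exp ((-(p * t) : ℝ) * Complex.I) -
        (Real.exp (-((r + 2) * (p * (1 - p)) / 2) * t ^ 2) : ℝ)‖ ≤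
      p * (1 - p) * (1 / 6 + 0.0594 * (p * (1 - p))) * ∑ j ∈ Finset.range (r + 1),
        |t| ^ 3 * Real.exp (-(0.2026 * (p * (1 - p)) * j + p * (1 - p) / 2 * (r - j)) * t ^ 2) +
      (p + 1.5708 * (p * (1 - p))) *
        (|t| * Real.exp (-((r + 1) * (p * (1 - p)) / 2) * t ^ 2)) := by
  have hu : 0 ≤ p * (1 - p) := mul_nonneg h0 (sub_nonneg.2 h1)
  set u := p * (1 - p)
  set g : ℂ := ((Real.exp (-(u / 2) * t ^ 2) : ℝ) : ℂ) with hg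
  have hgn : ‖g‖ = Real.exp (-(u / 2) * t ^ 2) := Complex.norm_of_nonneg (Real.exp_nonneg _)
  have hgp : ((Real.exp (-((r + 2) * u / 2) * t ^ 2) : ℝ) : ℂ) = g ^ (r + 1) * g := by
    rw [hg, ← pow_succ, ← Complex.ofReal_pow, ← Real.exp_nat_mul]
    push_cast
    ring_nf
  have hgm : ‖g ^ (r + 1)‖ = Real.exp (-((r + 1) * u / 2) * t ^ 2) := by
    rw [norm_pow, hgn, ← Real.exp_nat_mul]
    push_cast
    ring_nf
  have e : bernoulliCharFun p t ^ (r + 1) * Complex.exp ((-(p * t) : ℝ) * Complex.I) -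
      g ^ (r + 1) * g = (bernoulliCharFun p t ^ (r + 1) - g ^ (r + 1)) *
        Complex.exp ((-(p * t) : ℝ) * Complex.I) +
      g ^ (r + 1) * (Complex.exp ((-(p * t) : ℝ) * Complex.I) - g) := by ring
  rw [hgp, e]
  refine (norm_add_le _ _).trans (add_le_add ?_ ?_)
  · rw [norm_mul, Complex.norm_exp_ofReal_mul_I, mul_one]
    refine (norm_pow_sub_pow_le r (norm_bernoulliCharFun_le h0 h1 ht) hgn.le).trans ?_
    rw [← Finset.mul_sum]
    exact (mul_le_mul_of_nonneg_right (norm_bernoulliCharFun_sub_gaussian_le h0 h1 ht)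
      (Finset.sum_nonneg fun j _ => Real.exp_nonneg _)).trans_eq (mul_assoc _ _ _)
  · rw [norm_mul, hgm, mul_comm]
    exact (mul_le_mul_of_nonneg_right (norm_exp_mul_I_sub_gaussian_le h0 hu ht)
      (Real.exp_nonneg _)).trans_eq (mul_assoc _ _ _)

theorem binomial_prob_sub_gaussian_le {p : ℝ} (h0 : 0 < p) (h1 : p < 1) {r : ℕ} (hr : 0 < r)
    (k : ℕ) :
    |2 * Real.pi * ((r + 1).choose k * p ^ k * (1 - p) ^ (r + 1 - k)) -
        √(2 * Real.pi / ((r + 2) * (p * (1 - p)))) *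
          Real.exp (-(((r + 2) * p - k) ^ 2 / (2 * ((r + 2) * (p * (1 - p))))))| ≤
      p * (1 - p) * (1 / 6 + 0.0594 * (p * (1 - p))) * ∑ j ∈ Finset.range (r + 1),
        1 / (0.2026 * (p * (1 - p)) * j + p * (1 - p) / 2 * (r - j)) ^ 2 +
      (p + 1.5708 * (p * (1 - p))) * (1 / ((r + 1) * (p * (1 - p)) / 2)) +
      Real.exp (-((r + 2) * (p * (1 - p)) / 2) * Real.pi ^ 2) /
        ((r + 2) * (p * (1 - p)) / 2 * Real.pi) := by
  have hu : 0 < p * (1 - p) := mul_pos h0 (sub_pos.2 h1)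
  have hpi := Real.pi_pos
  have hr' : (0 : ℝ) < r := by exact_mod_cast hr
  have hbin := intervalIntegral_bernoulliCharFun_pow p (r + 1) k
  have hgau := integral_gaussian_mul_exp_mul_I (v := (r + 2) * (p * (1 - p))) (by positivity)
    ((r + 2) * p - k)
  have htail := norm_integral_sub_intervalIntegral_le
    (g := fun t : ℝ => (Real.exp (-((r + 2) * (p * (1 - p)) / 2) * t ^ 2) : ℂ) *
      Complex.exp ((((r + 2) * p - k) * t : ℝ) * Complex.I))
    (c := (r + 2) * (p * (1 - p)) / 2) (by positivity) hpi (by fun_prop) (fun t => by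
      rw [norm_mul, Complex.norm_exp_ofReal_mul_I, mul_one,
        Complex.norm_of_nonneg (Real.exp_nonneg _)])
  rw [hgau] at htail
  have hcont := continuous_bernoulliCharFun p
  have hmid : ‖(∫ t in -Real.pi..Real.pi, bernoulliCharFun p t ^ (r + 1) *
        Complex.exp ((((r + 1 : ℕ) * p - k) * t : ℝ) * Complex.I)) -
      ∫ t in -Real.pi..Real.pi, (Real.exp (-((r + 2) * (p * (1 - p)) / 2) * t ^ 2) : ℂ) *
        Complex.exp ((((r + 2) * p - k) * t : ℝ) * Complex.I)‖ ≤
      p * (1 - p) * (1 / 6 + 0.0594 * (p * (1 - p))) * ∑ j ∈ Finset.range (r + 1),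
        1 / (0.2026 * (p * (1 - p)) * j + p * (1 - p) / 2 * (r - j)) ^ 2 +
      (p + 1.5708 * (p * (1 - p))) * (1 / ((r + 1) * (p * (1 - p)) / 2)) := by
    rw [← intervalIntegral.integral_sub (Continuous.intervalIntegrable (by fun_prop) _ _)
      (Continuous.intervalIntegrable (by fun_prop) _ _)]
    refine (intervalIntegral.norm_integral_le_of_norm_le (by linarith)
      (Filter.Eventually.of_forall fun t ht => ?_)
      (Continuous.intervalIntegrable (u := fun t : ℝ =>
        p * (1 - p) * (1 / 6 + 0.0594 * (p * (1 - p))) * ∑ j ∈ Finset.range (r + 1),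
        |t| ^ 3 * Real.exp (-(0.2026 * (p * (1 - p)) * j + p * (1 - p) / 2 * (r - j)) * t ^ 2) +
        (p + 1.5708 * (p * (1 - p))) *
        (|t| * Real.exp (-((r + 1) * (p * (1 - p)) / 2) * t ^ 2))) (by fun_prop) _ _)).trans ?_
    · have ht' : |t| ≤ Real.pi := abs_le.2 ⟨ht.1.le, ht.2⟩
      refine le_trans (le_of_eq ?_) (norm_bernoulliCharFun_pow_mul_sub_gaussian_le h0.le h1.le r ht')
      have e : Complex.exp ((((r + 1 : ℕ) * p - k) * t : ℝ) * Complex.I) =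
          Complex.exp ((-(p * t) : ℝ) * Complex.I) *
            Complex.exp ((((r + 2) * p - k) * t : ℝ) * Complex.I) := by
        rw [← Complex.exp_add]
        push_cast
        ring_nf
      rw [e, ← mul_assoc, ← sub_mul, norm_mul, Complex.norm_exp_ofReal_mul_I, mul_one]
    · rw [intervalIntegral.integral_add (Continuous.intervalIntegrable (by fun_prop) _ _)
        (Continuous.intervalIntegrable (by fun_prop) _ _), intervalIntegral.integral_const_mul,
        intervalIntegral.integral_const_mul, intervalIntegral.integral_finsetSum
          fun j _ => Continuous.intervalIntegrable (by fun_prop) _ _]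
      refine add_le_add (mul_le_mul_of_nonneg_left (Finset.sum_le_sum fun j hj => ?_)
        (by positivity)) (mul_le_mul_of_nonneg_left
          (integral_abs_mul_exp_neg_mul_sq_le (by positivity) hpi.le) (by positivity))
      refine integral_abs_cube_mul_exp_neg_mul_sq_le ?_ hpi.le
      have hj' : (j : ℝ) ≤ r := by exact_mod_cast Nat.lt_succ_iff.1 (Finset.mem_range.1 hj)
      have : 0 < p * (1 - p) * r := by positivity
      have : 0 ≤ p * (1 - p) * (r - j) := mul_nonneg hu.le (sub_nonneg.2 hj')
      nlinarith
  rw [hbin] at hmid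
  rw [← Real.norm_eq_abs, ← Complex.norm_real, Complex.ofReal_sub]
  rw [norm_sub_rev] at htail
  refine (norm_sub_le_norm_sub_add_norm_sub _ _ _).trans (add_le_add hmid htail)

theorem hasDerivAt_Phi (x : ℝ) :
    HasDerivAt Phi ((√(2 * Real.pi))⁻¹ * Real.exp (-x ^ 2 / 2)) x := by
  have hc : Continuous fun t : ℝ => Real.exp (-t ^ 2 / 2) := by fun_prop
  have hi : MeasureTheory.Integrable fun t : ℝ => Real.exp (-t ^ 2 / 2) := by
    convert integrable_exp_neg_mul_sq (b := 1 / 2) (by norm_num) using 3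
    ring
  have e : Phi = fun x => (√(2 * Real.pi))⁻¹ *
      ((∫ t in Set.Iic (0 : ℝ), Real.exp (-t ^ 2 / 2)) + ∫ t in (0 : ℝ)..x, Real.exp (-t ^ 2 / 2)) := by
    funext x
    rw [Phi, ← MeasureTheory.integral_Iic_eq_integral_Iio,
      ← intervalIntegral.integral_Iic_sub_Iic hi.integrableOn hi.integrableOn]
    ring
  rw [e]
  exact ((intervalIntegral.integral_hasDerivAt_right (hc.intervalIntegrable _ _)
    (hc.stronglyMeasurableAtFilter _ _) hc.continuousAt).const_add _).const_mul _

theorem hasDerivAt_binomial_cdf (m k : ℕ) (p : ℝ) :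
    HasDerivAt (fun s : ℝ =>
        ∑ i ∈ Finset.range (k + 1), ((m + 1).choose i : ℝ) * s ^ i * (1 - s) ^ (m + 1 - i))
      (-((m + 1) * (m.choose k * p ^ k * (1 - p) ^ (m - k)))) p := by
  have hsub : HasDerivAt (fun s : ℝ => 1 - s) (-1) p := by
    simpa using (hasDerivAt_id p).const_sub 1
  induction k with
  | zero =>
    simp only [zero_add, Finset.sum_range_one, Nat.choose_zero_right, Nat.cast_one, pow_zero,
      mul_one, one_mul, Nat.sub_zero]
    exact (hsub.pow (m + 1)).congr_deriv (by push_cast; simp)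
  | succ k ih =>
    simp_rw [Finset.sum_range_succ _ (k + 1)]
    refine (ih.add (((hasDerivAt_pow (k + 1) p).const_mul ((m + 1).choose (k + 1) : ℝ)).mul
      (hsub.pow (m + 1 - (k + 1))))).congr_deriv ?_
    have h1 : ((m + 1 : ℕ) : ℝ) * m.choose k = (m + 1).choose (k + 1) * (k + 1 : ℕ) := by
      exact_mod_cast Nat.add_one_mul_choose_eq m k
    simp only [Nat.add_sub_add_right, Nat.add_sub_cancel, Pi.pow_apply]
    rcases lt_or_ge k m with hk | hk
    · obtain ⟨d, rfl⟩ := Nat.exists_eq_add_of_lt hk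
      have e1 : k + d + 1 - k = d + 1 := by omega
      have e2 : k + d + 1 - (k + 1) = d := by omega
      have h2 : ((k + d + 1 + 1 : ℕ) : ℝ) * (k + d + 1).choose (k + 1) =
          (k + d + 1 + 1).choose (k + 1) * (d + 1 : ℕ) := by
        have := Nat.choose_mul_succ_eq (k + d + 1) (k + 1)
        rw [show k + d + 1 + 1 - (k + 1) = d + 1 by omega] at this
        rw [mul_comm]
        exact_mod_cast this
      rw [e1, e2]
      push_cast at h1 h2 ⊢
      linear_combination (-(p ^ k * (1 - p) ^ (d + 1))) * h1 + (p ^ (k + 1) * (1 - p) ^ d) * h2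
    · rw [Nat.sub_eq_zero_of_le hk, Nat.sub_eq_zero_of_le (hk.trans (Nat.le_succ k)),
        Nat.choose_eq_zero_of_lt (Nat.lt_succ_of_le hk)]
      push_cast at h1 ⊢
      simp
      linear_combination (-p ^ k) * h1

theorem hasDerivAt_standardization {n x p : ℝ} (hn : 0 < n) (h0 : 0 < p) (h1 : p < 1) :
    HasDerivAt (fun s : ℝ => (x - n * s) / √(n * s * (1 - s)))
      (-(1 / (p * (1 - p))) * (√(n * p * (1 - p)) +
        (x - n * p) / √(n * p * (1 - p)) * (1 - 2 * p) / 2)) p := by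
  have hq : 0 < 1 - p := sub_pos.2 h1
  have hv : 0 < n * p * (1 - p) := by positivity
  have hd : HasDerivAt (fun s : ℝ => n * s * (1 - s)) (n * (1 - 2 * p)) p :=
    ((((hasDerivAt_id p).const_mul n)).mul ((hasDerivAt_id p).const_sub 1)).congr_deriv (by
      simp
      ring)
  have hnum : HasDerivAt (fun s : ℝ => x - n * s) (-n) p :=
    (((hasDerivAt_id p).const_mul n).const_sub x).congr_deriv (by simp)
  have hs : 0 < √(n * p * (1 - p)) := Real.sqrt_pos.2 hv
  refine (hnum.div (hd.sqrt hv.ne') hs.ne').congr_deriv ?_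
  have hsq := Real.sq_sqrt hv.le
  set σ := √(n * p * (1 - p))
  field_simp
  rw [hsq]
  ring

theorem abs_mul_gaussian_density_le (z : ℝ) :
    (√(2 * Real.pi))⁻¹ * Real.exp (-z ^ 2 / 2) * |z| ≤ 0.242 := by
  have hpi := Real.pi_gt_d4
  refine abs_le_of_sq_le_sq' ?_ (by norm_num) |>.2
  have h1 : (√(2 * Real.pi))⁻¹ ^ 2 = 1 / (2 * Real.pi) := by
    rw [inv_pow, Real.sq_sqrt (by positivity), one_div]
  have h2 : Real.exp (-z ^ 2 / 2) ^ 2 = Real.exp (-1) * Real.exp (-(z ^ 2 - 1)) := by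
    rw [← Real.exp_nat_mul, ← Real.exp_add]
    push_cast
    ring_nf
  have h3 : Real.exp (-(z ^ 2 - 1)) * z ^ 2 ≤ 1 := by
    have h4 := Real.add_one_le_exp (z ^ 2 - 1)
    calc Real.exp (-(z ^ 2 - 1)) * z ^ 2 ≤ Real.exp (-(z ^ 2 - 1)) * Real.exp (z ^ 2 - 1) := by
          gcongr
          linarith
      _ = 1 := by rw [← Real.exp_add]; simp
  rw [mul_pow, mul_pow, sq_abs, h1, h2]
  have h5 := Real.exp_neg_one_lt_d9
  have h6 : 1 / (2 * Real.pi) ≤ 1 / (2 * 3.1415) := by gcongr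
  calc 1 / (2 * Real.pi) * (Real.exp (-1) * Real.exp (-(z ^ 2 - 1))) * z ^ 2
      = 1 / (2 * Real.pi) * Real.exp (-1) * (Real.exp (-(z ^ 2 - 1)) * z ^ 2) := by ring
    _ ≤ 1 / (2 * 3.1415) * 0.3678794412 * 1 := by gcongr
    _ ≤ 0.242 ^ 2 := by norm_num

theorem inv_sqrt_two_pi_le : (√(2 * Real.pi))⁻¹ ≤ 0.4 := by
  have h : (2.5 : ℝ) ≤ √(2 * Real.pi) := Real.le_sqrt_of_sq_le (by linarith [Real.pi_gt_d4])
  calc (√(2 * Real.pi))⁻¹ ≤ (2.5 : ℝ)⁻¹ := by gcongr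
    _ = 0.4 := by norm_num

theorem binomial_gaussian_error_le {p : ℝ} (h0 : 0 < p) (h1 : p < 1) {r : ℕ} (hr : 6 ≤ r)
    (hv : 0.637 ≤ (r + 2) * (p * (1 - p))) (k : ℕ) :
    |(r + 2) * (p * (1 - p)) * ((r + 1).choose k * p ^ k * (1 - p) ^ (r + 1 - k)) -
        (√(2 * Real.pi))⁻¹ * √((r + 2) * (p * (1 - p))) *
          Real.exp (-(((r + 2) * p - k) ^ 2 / (2 * ((r + 2) * (p * (1 - p))))))| ≤
      0.516 / (1 - p) := by
  have hq : 0 < 1 - p := sub_pos.2 h1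
  have hu : 0 < p * (1 - p) := mul_pos h0 hq
  have hpi := Real.pi_pos
  have hpi4 := Real.pi_gt_d4
  have hr' : (6 : ℝ) ≤ r := by exact_mod_cast hr
  have hmain := binomial_prob_sub_gaussian_le h0 h1 (by omega : 0 < r) k
  set u := p * (1 - p) with hu_def
  set v := (r + 2) * u with hv_def
  have hv0 : 0 < v := by linarith
  set b := ((r + 1).choose k * p ^ k * (1 - p) ^ (r + 1 - k) : ℝ)
  set E := Real.exp (-(((r + 2) * p - k) ^ 2 / (2 * v)))
  have e : v * b - (√(2 * Real.pi))⁻¹ * √v * E =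
      v / (2 * Real.pi) * (2 * Real.pi * b - √(2 * Real.pi / v) * E) := by
    have h2 := Real.sq_sqrt hv0.le
    have h3 := Real.sq_sqrt (show 0 ≤ 2 * Real.pi by positivity)
    have h4 : 0 < √v := Real.sqrt_pos.2 hv0
    have h5 : 0 < √(2 * Real.pi) := Real.sqrt_pos.2 (by positivity)
    have h6 : v / (2 * Real.pi) * (√(2 * Real.pi) / √v) = (√(2 * Real.pi))⁻¹ * √v := by
      rw [← h2, ← h3, Real.sqrt_sq h4.le, Real.sqrt_sq h5.le]
      field_simp
    have h7 : v / (2 * Real.pi) * (2 * Real.pi) = v := div_mul_cancel₀ _ (by positivity)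
    rw [Real.sqrt_div (by positivity)]
    linear_combination E * h6 - b * h7
  rw [e, abs_mul, abs_of_pos (by positivity : 0 < v / (2 * Real.pi))]
  refine (mul_le_mul_of_nonneg_left hmain (by positivity)).trans ?_
  have hinv : 1 / (2 * Real.pi) ≤ 0.15916 := by
    rw [div_le_iff₀ (by positivity)]
    linarith
  have hsum : ∑ j ∈ Finset.range (r + 1), 1 / (0.2026 * u * j + u / 2 * (r - j)) ^ 2 ≤
      16.7 / (v * u) := by
    refine (sum_inv_sq_arith_le (a := 0.2026 * u) (b := u / 2) (by linarith) r
      (by nlinarith)).trans ?_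
    have ea : (0.2026 * u * r - (u / 2 - 0.2026 * u) / 2) * (u / 2 * r + (u / 2 - 0.2026 * u) / 2) =
        u ^ 2 * ((0.2026 * r - 0.1487) * (0.5 * r + 0.1487)) := by ring
    have hpos : 0 < (0.2026 * r - 0.1487) * (0.5 * r + 0.1487 : ℝ) :=
      mul_pos (by linarith) (by linarith)
    rw [ea, div_le_div_iff₀ (by positivity) (by positivity), hv_def]
    have hpoly : (r + 1) * (r + 2) ≤ 16.7 * ((0.2026 * r - 0.1487) * (0.5 * r + 0.1487 : ℝ)) := by
      nlinarith
    nlinarith [mul_le_mul_of_nonneg_left hpoly (sq_nonneg u)]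
  have t1 : v / (2 * Real.pi) * (u * (1 / 6 + 0.0594 * u) *
      ∑ j ∈ Finset.range (r + 1), 1 / (0.2026 * u * j + u / 2 * (r - j)) ^ 2) ≤
      2.658 * (1 / 6 + 0.0594 * u) := by
    calc _ ≤ v / (2 * Real.pi) * (u * (1 / 6 + 0.0594 * u) * (16.7 / (v * u))) := by gcongr
      _ = 1 / (2 * Real.pi) * (16.7 * (1 / 6 + 0.0594 * u)) := by field_simp
      _ ≤ 0.15916 * (16.7 * (1 / 6 + 0.0594 * u)) := by gcongr
      _ ≤ _ := by linarith
  have t2 : v / (2 * Real.pi) * ((p + 1.5708 * u) * (1 / ((r + 1) * u / 2))) ≤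
      0.36381 * (p + 1.5708 * u) := by
    have hratio : (r + 2 : ℝ) / (r + 1) ≤ 8 / 7 := by
      rw [div_le_div_iff₀ (by positivity) (by positivity)]
      linarith
    calc _ = 1 / (2 * Real.pi) * ((r + 2) / (r + 1)) * (2 * (p + 1.5708 * u)) := by
          rw [hv_def]
          field_simp
      _ ≤ 0.15916 * (8 / 7) * (2 * (p + 1.5708 * u)) := by gcongr
      _ ≤ _ := by linarith
  have t3 : v / (2 * Real.pi) * (Real.exp (-(v / 2) * Real.pi ^ 2) / (v / 2 * Real.pi)) ≤
      0.0051 := by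
    have hexp : Real.exp (-(v / 2) * Real.pi ^ 2) ≤ 0.3678794412 ^ 3 := by
      calc Real.exp (-(v / 2) * Real.pi ^ 2) ≤ Real.exp ((3 : ℕ) * (-1)) := by
            refine Real.exp_le_exp.2 ?_
            push_cast
            nlinarith
        _ = Real.exp (-1) ^ 3 := Real.exp_nat_mul _ _
        _ ≤ _ := by
            gcongr
            exact Real.exp_neg_one_lt_d9.le
    calc _ = Real.exp (-(v / 2) * Real.pi ^ 2) / Real.pi ^ 2 := by field_simp
      _ ≤ 0.3678794412 ^ 3 / 3.1415 ^ 2 := by gcongr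
      _ ≤ _ := by norm_num
  rw [mul_add, mul_add]
  refine (add_le_add (add_le_add t1 t2) t3).trans ?_
  rw [le_div_iff₀ hq, hu_def]
  nlinarith [mul_nonneg hq.le (sq_nonneg (p - 0.2)), mul_nonneg h0.le (sq_nonneg (p - 0.2)),
    mul_nonneg h0.le (sq_nonneg (p - 0.8)), sq_nonneg (p - 0.2), mul_pos h0 hq]

theorem binomial_prob_le_one {p : ℝ} (h0 : 0 ≤ p) (h1 : p ≤ 1) (m k : ℕ) :
    m.choose k * p ^ k * (1 - p) ^ (m - k) ≤ 1 := by
  have hq : 0 ≤ 1 - p := sub_nonneg.2 h1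
  rcases lt_or_ge m k with hk | hk
  · simp [Nat.choose_eq_zero_of_lt hk]
  · have h := add_pow p (1 - p) m
    rw [add_sub_cancel, one_pow] at h
    refine (le_trans (le_of_eq ?_) (Finset.single_le_sum
      (f := fun j => p ^ j * (1 - p) ^ (m - j) * (m.choose j : ℝ))
      (fun j _ => by positivity) (Finset.mem_range.2 (Nat.lt_succ_of_le hk)))).trans_eq h.symm
    ring

theorem binomial_prob_mul_variance_le {p : ℝ} (h0 : 0 < p) (h1 : p < 1) {m : ℕ} (hm : 0 < m)
    (hm6 : m ≤ 6) (k : ℕ) :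
    (m + 1) * (p * (1 - p)) * (m.choose k * p ^ k * (1 - p) ^ (m - k)) ≤
      0.516 / (1 - p) + 0.121 := by
  have hq : 0 < 1 - p := sub_pos.2 h1
  have hu : 0 < p * (1 - p) := mul_pos h0 hq
  have hpi := Real.pi_gt_d4
  have hpi0 := Real.pi_pos
  have hm1 : (1 : ℝ) ≤ m := by exact_mod_cast hm
  have hm6' : (m : ℝ) ≤ 6 := by exact_mod_cast hm6
  have hb := binomial_prob_le h0 h1 hm k
  set b := (m.choose k * p ^ k * (1 - p) ^ (m - k) : ℝ)
  have hb0 : 0 ≤ b := by positivity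
  have hb2 : (2 * Real.pi * b) ^ 2 ≤ Real.pi / (0.2026 * (m * (p * (1 - p)))) := by
    have := pow_le_pow_left₀ (by positivity) hb 2
    rwa [Real.sq_sqrt (by positivity)] at this
  have hb3 : m * (p * (1 - p)) * b ^ 2 ≤ 0.3928 := by
    rw [le_div_iff₀ (by positivity)] at hb2
    have : Real.pi * (0.8104 * Real.pi * (m * (p * (1 - p)) * b ^ 2)) ≤ Real.pi * 1 := by linarith
    have h5 := le_of_mul_le_mul_left this hpi0
    have h6 : 0 ≤ m * (p * (1 - p)) * b ^ 2 := by positivity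
    nlinarith
  have hmr : ((m : ℝ) + 1) ^ 2 ≤ 49 / 6 * m := by nlinarith
  have hA : ((m + 1) * (p * (1 - p)) * b) ^ 2 ≤ 3.208 * (p * (1 - p)) := by
    calc ((m + 1) * (p * (1 - p)) * b) ^ 2 = (m + 1) ^ 2 * ((p * (1 - p)) ^ 2 * b ^ 2) := by ring
      _ ≤ 49 / 6 * m * ((p * (1 - p)) ^ 2 * b ^ 2) := by gcongr
      _ = 49 / 6 * (p * (1 - p)) * (m * (p * (1 - p)) * b ^ 2) := by ring
      _ ≤ 49 / 6 * (p * (1 - p)) * 0.3928 := by gcongr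
      _ ≤ _ := by linarith
  have hR : 3.208 * (p * (1 - p)) ≤ (0.516 / (1 - p) + 0.121) ^ 2 := by
    have e : (0.516 / (1 - p) + 0.121) ^ 2 = (0.516 + 0.121 * (1 - p)) ^ 2 / (1 - p) ^ 2 := by
      field_simp
    rw [e, le_div_iff₀ (by positivity)]
    have key : 0 ≤ (1 - p - 3 / 4) ^ 2 * ((1 - p) ^ 2 + (1 - p) / 2 + 3 / 16) := by positivity
    nlinarith
  exact (sq_le_sq₀ (by positivity) (by positivity)).1 (hA.trans hR)

theorem abs_binomial_sub_gaussian_le {p : ℝ} (h0 : 0 < p) (h1 : p < 1) (m k : ℕ) (hk : k ≤ m + 1) :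
    |(m + 1) * (p * (1 - p)) * (m.choose k * p ^ k * (1 - p) ^ (m - k)) -
        (√(2 * Real.pi))⁻¹ *
          Real.exp (-((k - (m + 1) * p) / √((m + 1) * p * (1 - p))) ^ 2 / 2) *
          (√((m + 1) * p * (1 - p)) +
            (k - (m + 1) * p) / √((m + 1) * p * (1 - p)) * (1 - 2 * p) / 2)| ≤
      0.516 / (1 - p) + 0.121 := by
  have hq : 0 < 1 - p := sub_pos.2 h1
  have hu : 0 < p * (1 - p) := mul_pos h0 hq
  have hv : 0 < (m + 1) * p * (1 - p) := by positivity
  have hs : 0 < √((m + 1) * p * (1 - p)) := Real.sqrt_pos.2 hv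
  have hsq := Real.sq_sqrt hv.le
  have hk' : (k : ℝ) ≤ m + 1 := by exact_mod_cast hk
  have hb1 := binomial_prob_le_one h0.le h1.le m k
  have hb0 : 0 ≤ (m.choose k * p ^ k * (1 - p) ^ (m - k) : ℝ) := by positivity
  have hrhs : 0.516 ≤ 0.516 / (1 - p) := by
    rw [le_div_iff₀ hq]
    linarith
  set σ := √((m + 1) * p * (1 - p)) with hσ
  set z := (k - (m + 1) * p) / σ with hz
  set c := (√(2 * Real.pi))⁻¹ with hc
  have hc0 : 0 ≤ c := by positivity
  have hzσ : z * σ = k - (m + 1) * p := div_mul_cancel₀ _ hs.ne'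
  have hB0 : 0 ≤ σ + z * (1 - 2 * p) / 2 := by
    have : σ * (σ + z * (1 - 2 * p) / 2) = (k * (1 - p) + (m + 1 - k) * p) / 2 := by
      linear_combination hsq + (1 - 2 * p) / 2 * hzσ
    have h3 : 0 ≤ (k * (1 - p) + (m + 1 - k) * p) / 2 := by
      have := mul_nonneg (sub_nonneg.2 hk') h0.le
      positivity
    exact nonneg_of_mul_nonneg_right (this ▸ h3) hs
  have hlin : |c * Real.exp (-z ^ 2 / 2) * (z * (1 - 2 * p) / 2)| ≤ 0.121 := by
    have h4 := abs_mul_gaussian_density_le z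
    have h5 : |1 - 2 * p| ≤ 1 := abs_le.2 ⟨by linarith, by linarith⟩
    have e : |c * Real.exp (-z ^ 2 / 2) * (z * (1 - 2 * p) / 2)| =
        c * Real.exp (-z ^ 2 / 2) * |z| * |1 - 2 * p| / 2 := by
      rw [abs_mul, abs_of_nonneg (by positivity : 0 ≤ c * Real.exp (-z ^ 2 / 2)), abs_div, abs_mul,
        abs_of_pos (by norm_num : (0 : ℝ) < 2)]
      ring
    have h6 : c * Real.exp (-z ^ 2 / 2) * |z| * |1 - 2 * p| ≤ 0.242 * 1 := by gcongr
    rw [e]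
    linarith
  have hexp1 : Real.exp (-z ^ 2 / 2) ≤ 1 := Real.exp_le_one_iff.2 (by nlinarith [sq_nonneg z])
  by_cases hbig : 6 < m ∧ 0.637 ≤ (m + 1) * (p * (1 - p))
  · obtain ⟨r, rfl⟩ : ∃ r, m = r + 1 := ⟨m - 1, by omega⟩
    have hmain := binomial_gaussian_error_le h0 h1 (r := r) (by omega)
      (by have := hbig.2; push_cast at this; linarith) k
    have ev : ((r + 2) * (p * (1 - p)) : ℝ) = ((r + 1 : ℕ) + 1) * p * (1 - p) := by
      push_cast
      ring
    have ez : -((((r + 2) * p - k) ^ 2) / (2 * (((r + 1 : ℕ) + 1) * p * (1 - p)))) =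
        -z ^ 2 / 2 := by
      rw [hz, div_pow, hsq]
      push_cast
      field_simp
      ring
    rw [ev, ez, ← hσ, ← hc] at hmain
    rw [← mul_assoc ((((r + 1 : ℕ) : ℝ) + 1)) p (1 - p)]
    have e : ∀ a : ℝ, a - c * Real.exp (-z ^ 2 / 2) * (σ + z * (1 - 2 * p) / 2) =
        (a - c * σ * Real.exp (-z ^ 2 / 2)) - c * Real.exp (-z ^ 2 / 2) * (z * (1 - 2 * p) / 2) :=
      fun a => by ring
    rw [e]
    exact (abs_sub _ _).trans (add_le_add hmain hlin)
  · have hA : (m + 1) * (p * (1 - p)) * (m.choose k * p ^ k * (1 - p) ^ (m - k)) ≤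
        0.516 / (1 - p) + 0.121 := by
      by_cases hm : 0 < m ∧ m ≤ 6
      · exact binomial_prob_mul_variance_le h0 h1 hm.1 hm.2 k
      · have hsmall : (m + 1) * (p * (1 - p)) ≤ 0.637 := by
          rcases Nat.eq_zero_or_pos m with rfl | hpos
          · push_cast
            nlinarith [sq_nonneg (p - 1 / 2)]
          · by_contra! hcon
            exact hbig ⟨by omega, hcon.le⟩
        have := mul_le_mul_of_nonneg_left hb1 (by positivity : 0 ≤ (m + 1) * (p * (1 - p)))
        linarith
    have hσq : 0.4 * σ ≤ 0.516 / (1 - p) := by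
      have h7 : σ ^ 2 ≤ (0.516 / (1 - p) / 0.4) ^ 2 := by
        rw [hsq]
        by_cases hm : m ≤ 6
        · have hm' : (m : ℝ) ≤ 6 := by exact_mod_cast hm
          have e : (0.516 / (1 - p) / 0.4) ^ 2 = 1.6641 / (1 - p) ^ 2 := by
            field_simp
            norm_num
          rw [e, le_div_iff₀ (by positivity)]
          have h8 : (m + 1) * p * (1 - p) ≤ 7 * p * (1 - p) := by
            gcongr
            linarith
          have key : 0 ≤ (1 - p - 3 / 4) ^ 2 * ((1 - p) ^ 2 + (1 - p) / 2 + 3 / 16) := by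
            positivity
          have h9 := mul_le_mul_of_nonneg_right h8 (sq_nonneg (1 - p))
          nlinarith
        · have h8 : (m + 1) * (p * (1 - p)) < 0.637 := by
            by_contra! hcon
            exact hbig ⟨by omega, hcon⟩
          have h9 : 1 ≤ 0.516 / (1 - p) / 0.4 := by
            rw [le_div_iff₀ (by norm_num)]
            linarith
          have h10 := one_le_pow₀ h9 (n := 2)
          linarith
      have h10 := (sq_le_sq₀ hs.le (by positivity)).1 h7
      rw [le_div_iff₀ (by norm_num)] at h10
      linarith
    have hBle : c * Real.exp (-z ^ 2 / 2) * (σ + z * (1 - 2 * p) / 2) ≤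
        0.516 / (1 - p) + 0.121 := by
      have h11 : c * Real.exp (-z ^ 2 / 2) * σ ≤ 0.4 * 1 * σ := by
        have := inv_sqrt_two_pi_le
        gcongr
      have h12 := (abs_le.1 hlin).2
      linarith
    have hA0 : 0 ≤ (m + 1) * (p * (1 - p)) * (m.choose k * p ^ k * (1 - p) ^ (m - k)) := by
      positivity
    have hBn : 0 ≤ c * Real.exp (-z ^ 2 / 2) * (σ + z * (1 - 2 * p) / 2) := by positivity
    exact abs_le.2 ⟨by linarith, by linarith⟩

/-- For `n ≥ 1`, `0 ≤ k ≤ n`, `0 < p < 1`, `q = 1 − p`: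
`|∂/∂p F_{n,p}(k+1) − ∂/∂p G_{n,p}(k)| ≤ (1/(pq))(c₁/q + c₂)` with
`c₁ = 0.516`, `c₂ = 0.121`, where `F_{n,p}(k+1) = Σ_{i=0}^{k} C(n,i) p^i q^{n−i}`
and `G_{n,p}(k) = Φ((k − np)/√(npq))` are viewed as functions of `p`. -/
theorem deriv_F_minus_deriv_G_bound_right (n k : ℕ) (hn : 1 ≤ n) (hk : k ≤ n)
    (p : ℝ) (hp : p ∈ Set.Ioo (0 : ℝ) 1) :
    |deriv (fun s : ℝ =>
        ∑ i ∈ Finset.range (k + 1), (n.choose i : ℝ) * s ^ i * (1 - s) ^ (n - i)) p -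
      deriv (fun s : ℝ =>
        Phi (((k : ℝ) - n * s) / Real.sqrt (n * s * (1 - s)))) p| ≤
      (1 / (p * (1 - p))) * (0.516 / (1 - p) + 0.121) := by
  obtain ⟨m, rfl⟩ : ∃ m, n = m + 1 := ⟨n - 1, by omega⟩
  obtain ⟨h0, h1⟩ := hp
  have hu : 0 < p * (1 - p) := mul_pos h0 (sub_pos.2 h1)
  have hmain := abs_binomial_sub_gaussian_le h0 h1 m k hk
  have hG := (hasDerivAt_Phi _).comp p
    (hasDerivAt_standardization (n := ((m + 1 : ℕ) : ℝ)) (x := k) (by positivity) h0 h1)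
  rw [(hasDerivAt_binomial_cdf m k p).deriv]
  have hG' := hG.deriv
  simp only [Function.comp_def] at hG'
  rw [hG']
  push_cast at hmain ⊢
  set B := (√(2 * Real.pi))⁻¹ *
    Real.exp (-((k - (m + 1) * p) / √((m + 1) * p * (1 - p))) ^ 2 / 2) with hB
  set D := √((m + 1) * p * (1 - p)) +
    (k - (m + 1) * p) / √((m + 1) * p * (1 - p)) * (1 - 2 * p) / 2 with hD
  have e : -((m + 1) * (m.choose k * p ^ k * (1 - p) ^ (m - k))) -
      B * (-(1 / (p * (1 - p))) * D) =
      -(1 / (p * (1 - p)) *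
        ((m + 1) * (p * (1 - p)) * (m.choose k * p ^ k * (1 - p) ^ (m - k)) - B * D)) := by
    have hq : 1 - p ≠ 0 := (sub_pos.2 h1).ne'
    field_simp
    ring
  rw [e, abs_neg, abs_mul, abs_of_pos (by positivity : 0 < 1 / (p * (1 - p)))]
  exact mul_le_mul_of_nonneg_left hmain (by positivity)
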